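/- Let 0 < n < ω and let D_0, …, D_{n−1} be Ramsey ultrafilters on ℕ which are pairwise not RK-equivalent. Then Q(D_0,…,D_{n−1}) has the pure decision property, in the following combinatorial form: whenever I_0, I_1 ⊆ Q(D_0,…,D_{n−1}) are open sets with I_0 ∩ I_1 = ∅ and I_0 ∪ I_1 dense, then for every condition p there exist q ≤⁰ p and i ∈ {0,1} such that no extension of q belongs to I_{1−i} (equivalently, every extension of q lying in I_0 ∪ I_1 lies in I_i). -/

import Mathlib

/-- `D` is a Ramsey ultrafilter on ℕ: it is nonprincipal and for every partition of ℕ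
(given as fibers of `f`) into sets none of which belongs to `D`, there is `A ∈ D`
meeting each piece in at most one point. -/
def IsRamseyUF (D : Ultrafilter ℕ) : Prop :=
  (∀ a : ℕ, ({a} : Set ℕ) ∉ D) ∧
    ∀ f : ℕ → ℕ, (∀ m : ℕ, f ⁻¹' {m} ∉ D) →
      ∃ A ∈ D, ∀ m : ℕ, (A ∩ f ⁻¹' {m}).Subsingleton

/-- The ultrafilters `D i` are pairwise not Rudin–Keisler-equivalent. -/
def PairwiseNotRKEquiv {n : ℕ} (D : Fin n → Ultrafilter ℕ) : Prop :=
  ∀ i j : Fin n, i ≠ j → ∀ f : ℕ → ℕ, Ultrafilter.map f (D i) ≠ D j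

/-- The position of `x` in the increasing enumeration of `A` (for `x ∈ A`):
the number of elements of `A` below `x`. -/
noncomputable def setIdx (A : Set ℕ) (x : ℕ) : ℕ := Set.ncard {y ∈ A | y < x}

/-- The `i`-th sliceMod `A_i` of `A`: if `⟨k_j⟩` is the increasing enumeration of `A`,
then `sliceMod n A i = {k_j : j ≡ i (mod n)}`. -/
def sliceMod (n : ℕ) (A : Set ℕ) (i : ℕ) : Set ℕ := {x ∈ A | setIdx A x % n = i}

/-- A condition of the forcing `Q = Qⁿ`: a pair `(w, A)` with `w ⊆ ℕ` finite and
`A ⊆ ℕ` infinite. -/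
structure QCond (n : ℕ) where
  w : Finset ℕ
  A : Set ℕ
  infinite : A.Infinite

/-- The order of `Q`: `(w, A) ≤ (v, B)` iff `w ∩ (max v + 1) = v` (i.e. `v ⊆ w` and
every element of `w \ v` exceeds every element of `v`), `w_i \ v_i ⊆ B_i` and
`A_i ⊆ B_i` for every `i < n`. -/
def QLE (n : ℕ) (p q : QCond n) : Prop :=
  q.w ⊆ p.w ∧
  (∀ x ∈ p.w, x ∉ q.w → ∀ y ∈ q.w, y < x) ∧
  (∀ i < n, sliceMod n (↑p.w) i \ sliceMod n (↑q.w) i ⊆ sliceMod n q.A i) ∧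
  (∀ i < n, sliceMod n p.A i ⊆ sliceMod n q.A i)

/-- `p` is a pure extension of `q` : `p ≤ q` and `wᵖ = w^q`. -/
def QPure (n : ℕ) (p q : QCond n) : Prop := QLE n p q ∧ p.w = q.w

/-- Membership in the suborder `Q(D 0, …, D (n-1))`: `A_i ∈ D i` for every `i < n`. -/
def InQD {n : ℕ} (D : Fin n → Ultrafilter ℕ) (p : QCond n) : Prop :=
  ∀ i : Fin n, sliceMod n p.A (i : ℕ) ∈ D i

/-- `p` and `q` are compatible in `Q`. -/
def QCompat (n : ℕ) (p q : QCond n) : Prop := ∃ r : QCond n, QLE n r p ∧ QLE n r q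

/-!
Each `D i` is a P-point and a Q-point, and since no two of the ultrafilters are RK-equivalent, one
can choose sets in `D 0, …, D (n-1)` whose union visits widely separated blocks of any given
partition of `ℕ` into intervals. There is then room to pad this union to a fast growing sequence
whose `m`-th term serves `D (m % n)`, so that diagonal intersections of measure one sets exist in
`Q(D 0, …, D (n-1))`.

Say that a stem `s` is decided against `I` if some condition with stem `s` has no extension in the
open set `I`. Diagonalizing over witnesses, `s` is decided against `I` as soon as `s ∪ {x}` is, for
almost all `x` with respect to the ultrafilter in charge of the next point of `s`. So if a stem `w`
is decided against neither `I₀` nor `I₁`, another diagonalization yields a condition with stem `w`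
all of whose extensions have undecided stems. But the stem of a member of `I₀` is decided against
`I₁` and vice versa, which contradicts density.
-/

open Filter Relation Set

section Ultrafilter

variable {α β γ : Type*}

theorem eventually_prod_ne_of_map_ne {D : Ultrafilter α} {E : Ultrafilter β} {φ : α → γ}
    {ψ : β → γ} (h : D.map φ ≠ E.map ψ) :
    ∀ᶠ p in (D : Filter α) ×ˢ (E : Filter β), φ p.1 ≠ ψ p.2 := by
  obtain ⟨s, hsE, hsD⟩ : ∃ s ∈ E.map ψ, s ∉ D.map φ := by
    by_contra! hle
    exact h (Ultrafilter.coe_le_coe.1 hle)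
  filter_upwards [prod_mem_prod (Ultrafilter.compl_mem_iff_notMem.2 hsD) hsE]
    with p hp heq
  exact hp.1 (by simpa only [mem_preimage, heq] using hp.2)

theorem map_ne_map_of_injOn [Nonempty β] {D : Ultrafilter α} {E : Ultrafilter β} {φ : α → γ}
    {ψ : β → γ} (hDE : ∀ f : α → β, D.map f ≠ E) {A : Set β} (hA : A ∈ E) (hψ : InjOn ψ A) :
    D.map φ ≠ E.map ψ := by
  intro heq
  have hinv : Function.invFunOn ψ A ∘ ψ =ᶠ[(E : Filter β)] id := by
    filter_upwards [hA] with x hx using hψ.leftInvOn_invFunOn hx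
  apply hDE (Function.invFunOn ψ A ∘ φ)
  rw [← Ultrafilter.map_map, heq, Ultrafilter.map_map]
  apply Ultrafilter.coe_injective
  rw [Ultrafilter.coe_map, map_congr hinv, map_id]

theorem exists_mem_forall_apply_eq [Finite γ] (D : Ultrafilter α) (φ : α → γ) :
    ∃ A ∈ D, ∃ a, ∀ x ∈ A, φ x = a := by
  obtain ⟨a, ha⟩ := Ultrafilter.eq_pure_of_finite (D.map φ)
  have hmem : {a} ∈ D.map φ := by rw [ha]; exact mem_pure.2 rfl
  exact ⟨φ ⁻¹' {a}, hmem, a, fun _ hx => hx⟩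

end Ultrafilter

namespace IsRamseyUF

variable {D : Ultrafilter ℕ}

theorem le_atTop (hD : IsRamseyUF D) : (D : Filter ℕ) ≤ atTop := by
  rw [← Nat.cofinite_eq_atTop, le_cofinite_iff_compl_singleton_mem]
  exact fun a => Ultrafilter.compl_mem_iff_notMem.2 (hD.1 a)

theorem infinite_of_mem (hD : IsRamseyUF D) {A : Set ℕ} (hA : A ∈ D) : A.Infinite :=
  Nat.frequently_atTop_iff_infinite.1
    ((Eventually.frequently (f := (D : Filter ℕ)) hA).filter_mono hD.le_atTop)

theorem exists_injOn (hD : IsRamseyUF D) {b : ℕ → ℕ} (hb : ∀ m, b ⁻¹' {m} ∉ D) :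
    ∃ A ∈ D, InjOn b A := by
  obtain ⟨A, hA, hsub⟩ := hD.2 b hb
  exact ⟨A, hA, fun x hx y hy hxy => hsub (b y) ⟨hx, hxy⟩ ⟨hy, rfl⟩⟩

theorem exists_forall_finite_diff (hD : IsRamseyUF D) {X : ℕ → Set ℕ} (hX : ∀ m, X m ∈ D) :
    ∃ A ∈ D, ∀ m, (A \ X m).Finite := by
  -- `exitIdx y` is the first `m` with `y ∉ X m`, capped at `y`.
  let exitIdx (y : ℕ) : ℕ := sInf {m | y ∈ X m → y ≤ m}
  have exitIdx_spec (y : ℕ) : y ∈ X (exitIdx y) → y ≤ exitIdx y :=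
    Nat.sInf_mem (s := {m | y ∈ X m → y ≤ m}) ⟨y, fun _ => le_rfl⟩
  have hfiber (m : ℕ) : exitIdx ⁻¹' {m} ∉ D := by
    intro hm
    obtain ⟨y, hy, hyX, hmy⟩ := Ultrafilter.nonempty_of_mem
      (inter_mem hm (inter_mem (hX m) (hD.le_atTop (Ioi_mem_atTop m))))
    obtain rfl : exitIdx y = m := hy
    exact (exitIdx_spec y hyX).not_gt hmy
  obtain ⟨A, hA, hinj⟩ := hD.exists_injOn hfiber
  refine ⟨A, hA, fun m => (finite_Iic m).of_injOn (f := exitIdx) ?_ (hinj.mono sdiff_subset)⟩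
  exact fun y hy => Nat.sInf_le fun hyX => absurd hyX hy.2

theorem exists_separated (hD : IsRamseyUF D) {b : ℕ → ℕ} (hb : ∀ m, b ⁻¹' {m} ∉ D) (N : ℕ)
    [NeZero N] :
    ∃ A ∈ D, ∀ x ∈ A, ∀ y ∈ A, b x < b y + N → b y < b x + N → x = y := by
  obtain ⟨A, hA, hinj⟩ := hD.exists_injOn hb
  obtain ⟨B, hB, a, ha⟩ := exists_mem_forall_apply_eq D fun x => Fin.ofNat N (b x)
  refine ⟨A ∩ B, inter_mem hA hB, fun x hx y hy hxy hyx => hinj hx.1 hy.1 ?_⟩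
  have hmod : b x ≡ b y [MOD N] := Fin.ext_iff.1 ((ha x hx.2).trans (ha y hy.2).symm)
  exact hmod.eq_of_abs_lt (by rw [abs_lt]; omega)

end IsRamseyUF

section Spacing

theorem eventually_prod_separated {D E : Ultrafilter ℕ} (hE : IsRamseyUF E)
    (hDE : ∀ f : ℕ → ℕ, D.map f ≠ E) {b : ℕ → ℕ} (hb : ∀ m, b ⁻¹' {m} ∉ E) (N : ℕ) :
    ∀ᶠ p in (D : Filter ℕ) ×ˢ (E : Filter ℕ), b p.1 < b p.2 + N → ¬ b p.2 < b p.1 + N := by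
  obtain ⟨A, hA, hinj⟩ := hE.exists_injOn hb
  have hne (d : ℤ) : ∀ᶠ p in (D : Filter ℕ) ×ˢ (E : Filter ℕ), (b p.1 : ℤ) ≠ b p.2 + d :=
    eventually_prod_ne_of_map_ne (φ := fun x => (b x : ℤ)) (ψ := fun y => (b y : ℤ) + d)
      (map_ne_map_of_injOn hDE hA fun x hx y hy hxy => hinj hx hy (by simpa using hxy))
  filter_upwards [(eventually_all_finite (finite_Ioo (-N : ℤ) N)).2 fun d _ => hne d]
    with p hp h₁ h₂
  exact hp (b p.1 - b p.2) ⟨by omega, by omega⟩ (by omega)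

theorem PairwiseNotRKEquiv.exists_separated {n : ℕ} {D : Fin n → Ultrafilter ℕ}
    (hRK : PairwiseNotRKEquiv D) (hD : ∀ i, IsRamseyUF (D i)) {b : ℕ → ℕ}
    (hb : ∀ m, (b ⁻¹' {m}).Finite) (N : ℕ) [NeZero N] :
    ∃ E : Fin n → Set ℕ, (∀ i, E i ∈ D i) ∧ ∀ i j, ∀ x ∈ E i, ∀ y ∈ E j,
      b x < b y + N → b y < b x + N → i = j ∧ x = y := by
  have hfiber (i : Fin n) (m : ℕ) : b ⁻¹' {m} ∉ D i := fun hm => (hD i).infinite_of_mem hm (hb m)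
  choose A hA hAsep using fun i => (hD i).exists_separated (hfiber i) N
  have hpair (i j : Fin n) : ∃ S ∈ D i, ∃ T ∈ D j, i ≠ j →
      ∀ x ∈ S, ∀ y ∈ T, b x < b y + N → ¬ b y < b x + N := by
    rcases eq_or_ne i j with rfl | hij
    · exact ⟨univ, univ_mem, univ, univ_mem, fun h => absurd rfl h⟩
    · obtain ⟨S, hS, T, hT, hST⟩ := mem_prod_iff.1
        (eventually_prod_separated (hD j) (hRK i j hij) (hfiber j) N)
      exact ⟨S, hS, T, hT, fun _ x hx y hy => hST (mk_mem_prod hx hy)⟩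
  choose S hS T hT hST using hpair
  refine ⟨fun i => A i ∩ ((⋂ j, S i j) ∩ ⋂ j, T j i), fun i => inter_mem (hA i)
    (inter_mem (iInter_mem.2 (hS i)) (iInter_mem.2 fun j => hT j i)), ?_⟩
  rintro i j x ⟨hxA, hxS, -⟩ y ⟨hyA, -, hyT⟩ hxy hyx
  rcases eq_or_ne i j with rfl | hij
  · exact ⟨rfl, hAsep i x hxA y hyA hxy hyx⟩
  · exact absurd hyx (hST i j hij x (mem_iInter.1 hxS j) y (mem_iInter.1 hyT i) hxy)

end Spacing

section Interleaving

theorem exists_seq_mem_lt {F : ℕ → Set ℕ} (hF : ∀ m, (F m).Infinite) (g : ℕ → ℕ) :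
    ∃ f : ℕ → ℕ, ∀ m, f m ∈ F m ∧ g (f m) < f (m + 1) := by
  choose next hmem hlt using fun m z => (hF m).exists_gt z
  let f : ℕ → ℕ := Nat.rec (next 0 0) fun m v => next (m + 1) (g v)
  refine ⟨f, fun m => ⟨?_, hlt _ _⟩⟩
  cases m with
  | zero => exact hmem _ _
  | succ m => exact hmem _ _

theorem exists_block_of_strictMono {h : ℕ → ℕ} (hh : StrictMono h) :
    ∃ b : ℕ → ℕ, ∀ e, e < h (b e + 1) ∧ (h 0 ≤ e → h (b e) ≤ e) := by
  refine ⟨fun e => Nat.findGreatest (fun k => h k ≤ e) e, fun e => ⟨?_, fun h0 => ?_⟩⟩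
  · by_contra! hle
    exact Nat.findGreatest_is_greatest (Nat.lt_succ_self _) (hh.le_apply.trans hle) hle
  · exact Nat.findGreatest_spec (P := fun k => h k ≤ e) (Nat.zero_le e) h0

theorem exists_strictMono_comp_range_eq {α : Type*} {T : Set α} {b : α → ℕ} (hT : T.Infinite)
    (hb : InjOn b T) : ∃ s : ℕ → α, StrictMono (b ∘ s) ∧ range s = T := by
  have hK : (b '' T).Infinite := hT.image hb
  choose s hsT hbs using Nat.nth_mem_of_infinite hK
  refine ⟨s, ?_, subset_antisymm (range_subset_iff.2 hsT) fun x hx => ?_⟩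
  · rw [show b ∘ s = Nat.nth (· ∈ b '' T) from funext hbs]
    exact Nat.nth_strictMono hK
  · obtain ⟨q, hq⟩ : b x ∈ range (Nat.nth (· ∈ b '' T)) :=
      (Nat.range_nth_of_infinite hK).symm ▸ mem_image_of_mem b hx
    exact ⟨q, hb (hsT q) hx ((hbs q).trans hq)⟩

theorem PairwiseNotRKEquiv.exists_seq_separated_blocks {n : ℕ} [NeZero n]
    {D : Fin n → Ultrafilter ℕ} (hRK : PairwiseNotRKEquiv D) (hD : ∀ i, IsRamseyUF (D i))
    {F : Fin n → Set ℕ} (hF : ∀ i, F i ∈ D i) {h : ℕ → ℕ} (hh : StrictMono h) (N : ℕ) [NeZero N] :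
    ∃ (k : ℕ → ℕ) (t : ℕ → Fin n × ℕ), (∀ q, k q + N ≤ k (q + 1)) ∧
      (∀ q, h (k q) ≤ (t q).2 ∧ (t q).2 < h (k q + 1)) ∧ (∀ q, (t q).2 ∈ F (t q).1) ∧
      ∀ i, {e | (i, e) ∈ range t} ∈ D i := by
  obtain ⟨b, hb⟩ := exists_block_of_strictMono hh
  have hbfin (k : ℕ) : (b ⁻¹' {k}).Finite := by
    refine (finite_Iio (h (k + 1))).subset ?_
    rintro e rfl
    exact (hb e).1
  obtain ⟨E, hED, hsep⟩ := hRK.exists_separated hD hbfin N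
  let T : Set (Fin n × ℕ) := {p | p.2 ∈ E p.1 ∧ p.2 ∈ F p.1 ∧ h 0 ≤ p.2}
  have hTD (i : Fin n) : {e | (i, e) ∈ T} ∈ D i :=
    inter_mem (hED i) (inter_mem (hF i) ((hD i).le_atTop (Ici_mem_atTop _)))
  have hTinf : T.Infinite :=
    (((hD 0).infinite_of_mem (hTD 0)).image (Prod.mk_right_injective 0).injOn).mono
      (image_subset_iff.2 subset_rfl)
  have hTsep {p q} (hp : p ∈ T) (hq : q ∈ T) (hpq : b p.2 < b q.2 + N) (hqp : b q.2 < b p.2 + N) :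
      p = q := Prod.ext_iff.2 (hsep _ _ _ hp.1 _ hq.1 hpq hqp)
  have hN : 0 < N := NeZero.pos N
  obtain ⟨t, htmono, hrange⟩ := exists_strictMono_comp_range_eq (b := fun p => b p.2) hTinf
    fun p hp q hq hpq => hTsep hp hq (by grind) (by grind)
  have htT (q : ℕ) : t q ∈ T := hrange ▸ mem_range_self q
  refine ⟨fun q => b (t q).2, t, fun q => ?_, fun q => ⟨(hb _).2 (htT q).2.2, (hb _).1⟩,
    fun q => (htT q).2.1, fun i => hrange ▸ hTD i⟩
  have hlt : b (t q).2 < b (t (q + 1)).2 := htmono q.lt_succ_self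
  by_contra! hclose
  exact hlt.ne (by rw [hTsep (htT q) (htT (q + 1)) (by omega) hclose])

/-- One round through the residues `r < n`, with `e` in slot `i` and the other slots padded by the
sequence `f`: the slots before `i` come from the `k`-th block of `n` consecutive terms of `f`, those
after `i` from block `k + 2`. It is meant for an `e` lying in block `k + 1`. -/
def paddedCycle (n : ℕ) (f : ℕ → ℕ) (k i e r : ℕ) : ℕ :=
  if r < i then f (n * k + r) else if r = i then e else f (n * (k + 2) + r)

variable {n k i e r s : ℕ} {f g : ℕ → ℕ}

theorem paddedCycle_self : paddedCycle n f k i e i = e := by simp [paddedCycle]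

theorem le_paddedCycle (hf : StrictMono f) (he : f (n * (k + 1)) ≤ e) :
    f (n * k) ≤ paddedCycle n f k i e r := by
  unfold paddedCycle
  split_ifs
  · exact hf.monotone (by omega)
  · exact (hf.monotone (by grind)).trans he
  · exact hf.monotone (by grind)

theorem apply_paddedCycle_le (hg : Monotone g) (hfg : ∀ a b, a < b → g (f a) ≤ f b)
    (he : e < f (n * (k + 2))) (hr : r < n) : g (paddedCycle n f k i e r) ≤ f (n * (k + 3)) := by
  unfold paddedCycle
  split_ifs
  · exact hfg _ _ (by grind)
  · exact (hg he.le).trans (hfg _ _ (by grind))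
  · exact hfg _ _ (by grind)

theorem apply_paddedCycle_le_paddedCycle (hg : Monotone g) (hfg : ∀ a b, a < b → g (f a) ≤ f b)
    (he : f (n * (k + 1)) ≤ e) (he' : e < f (n * (k + 2))) (hrs : r < s) (hs : s < n) :
    g (paddedCycle n f k i e r) ≤ paddedCycle n f k i e s := by
  have hblock : n * (k + 1) = n * k + n ∧ n * (k + 2) = n * k + 2 * n := by grind
  unfold paddedCycle
  split_ifs <;> try omega
  · exact hfg _ _ (by omega)
  · exact (hfg _ _ (by omega)).trans he
  · exact hfg _ _ (by omega)
  · exact (hg he'.le).trans (hfg _ _ (by omega))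
  · exact hfg _ _ (by omega)

theorem paddedCycle_mem [NeZero n] {F : Fin n → Set ℕ} {i : Fin n}
    (hf : ∀ m, f m ∈ F (Fin.ofNat n m)) (he : e ∈ F i) (m : ℕ) :
    paddedCycle n f k i e (m % n) ∈ F (Fin.ofNat n m) := by
  have hpad (k : ℕ) : f (n * k + m % n) ∈ F (Fin.ofNat n m) := by
    have hres : Fin.ofNat n (n * k + m % n) = Fin.ofNat n m := Fin.ext (by simp)
    exact hres ▸ hf _
  unfold paddedCycle
  split_ifs with _ hi
  · exact hpad k
  · exact (Fin.ext hi : Fin.ofNat n m = i) ▸ he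
  · exact hpad (k + 2)

/-- The concatenation over `q = 0, 1, 2, …` of the rounds `paddedCycle n f (k q) (t q).1 (t q).2`,
whose term at index `m` sits in slot `m % n`. -/
def paddedSeq (f k : ℕ → ℕ) (t : ℕ → Fin n × ℕ) (m : ℕ) : ℕ :=
  paddedCycle n f (k (m / n)) (t (m / n)).1 (t (m / n)).2 (m % n)

theorem paddedSeq_mul_add (f k : ℕ → ℕ) (t : ℕ → Fin n × ℕ) (q : ℕ) :
    paddedSeq f k t (n * q + (t q).1) = (t q).2 := by
  have hi := (t q).1.isLt
  simp only [paddedSeq, Nat.mul_add_div (Nat.zero_lt_of_lt hi), Nat.div_eq_of_lt hi, add_zero,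
    Nat.mul_add_mod, Nat.mod_eq_of_lt hi, paddedCycle_self]

theorem apply_paddedSeq_le_succ [NeZero n] {k : ℕ → ℕ} {t : ℕ → Fin n × ℕ} (hf : StrictMono f)
    (hg : Monotone g) (hfg : ∀ a b, a < b → g (f a) ≤ f b) (hk : ∀ q, k q + 3 ≤ k (q + 1))
    (ht : ∀ q, f (n * (k q + 1)) ≤ (t q).2 ∧ (t q).2 < f (n * (k q + 2))) (m : ℕ) :
    g (paddedSeq f k t m) ≤ paddedSeq f k t (m + 1) := by
  have hn : 0 < n := NeZero.pos n
  by_cases hdvd : n ∣ m + 1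
  · have hdiv : (m + 1) / n = m / n + 1 := Nat.succ_div_of_dvd hdvd
    calc g (paddedSeq f k t m)
        ≤ f (n * (k (m / n) + 3)) := apply_paddedCycle_le hg hfg (ht _).2 (Nat.mod_lt _ hn)
      _ ≤ f (n * k ((m + 1) / n)) := hf.monotone (Nat.mul_le_mul_left n (hdiv ▸ hk _))
      _ ≤ paddedSeq f k t (m + 1) := le_paddedCycle hf (ht _).1
  · have hdiv : (m + 1) / n = m / n := Nat.succ_div_of_not_dvd hdvd
    have hmod : m % n < (m + 1) % n := by
      have := Nat.div_add_mod m n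
      have := Nat.div_add_mod (m + 1) n
      rw [hdiv] at this
      omega
    rw [paddedSeq, paddedSeq, hdiv]
    exact apply_paddedCycle_le_paddedCycle hg hfg (ht _).1 (ht _).2 hmod (Nat.mod_lt _ hn)

theorem PairwiseNotRKEquiv.exists_sparse_interleaving [NeZero n] {D : Fin n → Ultrafilter ℕ}
    (hRK : PairwiseNotRKEquiv D) (hD : ∀ i, IsRamseyUF (D i)) {F : Fin n → Set ℕ}
    (hF : ∀ i, F i ∈ D i) (hg : Monotone g) (hlt : ∀ m, m < g m) :
    ∃ c : ℕ → ℕ, (∀ m, c m ∈ F (Fin.ofNat n m)) ∧ (∀ m, g (c m) ≤ c (m + 1)) ∧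
      ∀ i : Fin n, c '' {m | m % n = i} ∈ D i := by
  obtain ⟨f, hf⟩ := exists_seq_mem_lt (fun m => (hD _).infinite_of_mem (hF (Fin.ofNat n m))) g
  have hfmono : StrictMono f := strictMono_nat_of_lt_succ fun m => (hlt _).trans (hf m).2
  have hfg (a b : ℕ) (hab : a < b) : g (f a) ≤ f b := (hf a).2.le.trans (hfmono.monotone hab)
  have hblock : StrictMono fun k => f (n * (k + 1)) := fun k l hkl =>
    hfmono (Nat.mul_lt_mul_of_pos_left (Nat.succ_lt_succ hkl) (NeZero.pos n))
  -- A round around block `k + 1` occupies blocks `k` to `k + 2`, hence the spacing `3`.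
  obtain ⟨k, t, hk, ht, htF, htD⟩ := hRK.exists_seq_separated_blocks hD hF hblock 3
  refine ⟨paddedSeq f k t, fun m => paddedCycle_mem (fun m => (hf m).1) (htF _) m,
    apply_paddedSeq_le_succ hfmono hg hfg hk ht, fun i => ?_⟩
  filter_upwards [htD i]
  rintro e ⟨q, hq⟩
  refine ⟨n * q + i, by simp [Nat.mod_eq_of_lt i.isLt], ?_⟩
  simpa only [hq] using paddedSeq_mul_add f k t q

end Interleaving

section Slices

variable {n : ℕ}

theorem setIdx_range_apply {c : ℕ → ℕ} (hc : StrictMono c) (m : ℕ) :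
    setIdx (range c) (c m) = m := by
  have hbelow : {y ∈ range c | y < c m} = c '' Iio m := by
    ext y
    constructor
    · rintro ⟨⟨k, rfl⟩, hk⟩
      exact ⟨k, hc.lt_iff_lt.1 hk, rfl⟩
    · rintro ⟨k, hk, rfl⟩
      exact ⟨⟨k, rfl⟩, hc hk⟩
  rw [setIdx, hbelow, ncard_image_of_injective _ hc.injective, ← Finset.coe_Iio,
    ncard_coe_finset, Nat.card_Iio]

theorem sliceMod_range {c : ℕ → ℕ} (hc : StrictMono c) (i : ℕ) :
    sliceMod n (range c) i = c '' {m | m % n = i} := by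
  ext x
  constructor
  · rintro ⟨⟨m, rfl⟩, hm⟩
    exact ⟨m, by rwa [setIdx_range_apply hc] at hm, rfl⟩
  · rintro ⟨m, hm, rfl⟩
    exact ⟨⟨m, rfl⟩, by rwa [setIdx_range_apply hc]⟩

theorem infinite_sliceMod {A : Set ℕ} (hA : A.Infinite) {i : ℕ} (hi : i < n) :
    (sliceMod n A i).Infinite := by
  have hc : StrictMono (Nat.nth (· ∈ A)) := Nat.nth_strictMono hA
  have hrange : range (Nat.nth (· ∈ A)) = A := Nat.range_nth_of_infinite hA
  rw [← hrange, sliceMod_range hc]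
  exact (Nat.frequently_atTop_iff_infinite.1 (Nat.frequently_mod_eq hi)).image hc.injective.injOn

theorem setIdx_insert_self {s : Finset ℕ} {x : ℕ} (hx : ∀ y ∈ s, y < x) :
    setIdx (insert x (s : Set ℕ)) x = s.card := by
  rw [setIdx, ← ncard_coe_finset]
  congr 1
  ext y
  simp only [mem_insert_iff, Finset.mem_coe, mem_ofPred_eq]
  grind

theorem setIdx_insert_of_mem {s : Finset ℕ} {x y : ℕ} (hx : ∀ y ∈ s, y < x) (hy : y ∈ s) :
    setIdx (insert x (s : Set ℕ)) y = setIdx ↑s y := by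
  rw [setIdx, setIdx]
  congr 1
  ext z
  simp only [mem_insert_iff, Finset.mem_coe, mem_ofPred_eq]
  grind

theorem mem_sliceMod_insert {s : Finset ℕ} {x y i : ℕ} (hx : ∀ y ∈ s, y < x) :
    y ∈ sliceMod n ↑(insert x s) i ↔ y ∈ sliceMod n ↑s i ∨ y = x ∧ s.card % n = i := by
  rcases eq_or_ne y x with rfl | hyx
  · have hys : y ∉ s := fun h => (hx y h).false
    simp [sliceMod, setIdx_insert_self hx, hys]
  · by_cases hys : y ∈ s
    · simp [sliceMod, setIdx_insert_of_mem hx hys, hys, hyx]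
    · simp [sliceMod, hys, hyx]

end Slices

section Stems

variable {n : ℕ} {A B : Set ℕ} {s t : Finset ℕ}

/-- `t` arises from the stem `s` by adding one point of `A` on top, taken from the slice that
matches the position of the new point. Chains of such steps are the legal extensions of the first
coordinate of a condition. -/
def StemStep (n : ℕ) (A : Set ℕ) (s t : Finset ℕ) : Prop :=
  ∃ x ∈ sliceMod n A (s.card % n), (∀ y ∈ s, y < x) ∧ insert x s = t

theorem exists_stemStep [NeZero n] (hA : A.Infinite) (s : Finset ℕ) : ∃ t, StemStep n A s t := by
  obtain ⟨x, hxA, hx⟩ :=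
    (infinite_sliceMod hA (Nat.mod_lt s.card (NeZero.pos n))).exists_gt (s.sup id)
  exact ⟨insert x s, x, hxA, fun y hy => (Finset.le_sup (f := id) hy).trans_lt hx, rfl⟩

theorem endExtension_of_reflTransGen_stemStep (h : ReflTransGen (StemStep n A) s t) :
    s ⊆ t ∧ (∀ x ∈ t, x ∉ s → ∀ y ∈ s, y < x) ∧
      ∀ i < n, sliceMod n ↑t i \ sliceMod n ↑s i ⊆ sliceMod n A i := by
  induction h with
  | refl => exact ⟨subset_rfl, fun x hx hxs => absurd hx hxs, fun i _ x hx => absurd hx.1 hx.2⟩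
  | tail _ hstep ih =>
    obtain ⟨hsub, hend, hslice⟩ := ih
    obtain ⟨x, hxA, hx, rfl⟩ := hstep
    refine ⟨hsub.trans (Finset.subset_insert _ _), fun z hz hzs y hy => ?_, ?_⟩
    · rcases Finset.mem_insert.1 hz with rfl | hz
      · exact hx y (hsub hy)
      · exact hend z hz hzs y hy
    · rintro i hi z ⟨hzt, hzs⟩
      rcases (mem_sliceMod_insert hx).1 hzt with hz | ⟨rfl, rfl⟩
      · exact hslice i hi ⟨hz, hzs⟩
      · exact hxA

theorem reflTransGen_stemStep_of_endExtension [NeZero n] (hst : s ⊆ t)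
    (hend : ∀ x ∈ t, x ∉ s → ∀ y ∈ s, y < x)
    (hslice : ∀ i < n, sliceMod n ↑t i \ sliceMod n ↑s i ⊆ sliceMod n A i) :
    ReflTransGen (StemStep n A) s t := by
  induction t using Finset.induction_on_max with
  | empty => rw [Finset.subset_empty.1 hst]
  | insert a t ha ih =>
    by_cases has : a ∈ s
    · have hts : insert a t ⊆ s := fun x hx => by
        by_contra hxs
        have := hend x hx hxs a has
        grind
      rw [hst.antisymm hts]
    · have hst' : s ⊆ t := (Finset.subset_insert_iff_of_notMem has).1 hst
      refine (ih hst' (fun x hx => hend x (Finset.mem_insert_of_mem hx)) fun i hi x hx =>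
        hslice i hi ⟨(mem_sliceMod_insert ha).2 (.inl hx.1), hx.2⟩).tail ⟨a, ?_, ha, rfl⟩
      exact hslice _ (Nat.mod_lt _ (NeZero.pos n))
        ⟨(mem_sliceMod_insert ha).2 (.inr ⟨rfl, rfl⟩), fun h => has h.1⟩

theorem reflTransGen_stemStep_mono [NeZero n] (h : ReflTransGen (StemStep n A) s t)
    (hAB : ∀ i : Fin n, ∀ y ∈ sliceMod n A i, (∀ z ∈ s, z < y) → y ∈ sliceMod n B i) :
    ReflTransGen (StemStep n B) s t := by
  induction h with
  | refl => exact .refl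
  | tail hst hstep ih =>
    obtain ⟨x, hxA, hx, rfl⟩ := hstep
    have hsub := (endExtension_of_reflTransGen_stemStep hst).1
    exact ih.tail ⟨x, hAB (Fin.ofNat n _) x hxA fun z hz => hx z (hsub hz), hx, rfl⟩

theorem coe_subset_union_of_reflTransGen_stemStep (h : ReflTransGen (StemStep n A) s t) :
    (t : Set ℕ) ⊆ ↑s ∪ A := by
  induction h with
  | refl => exact subset_union_left
  | tail _ hstep ih =>
    obtain ⟨x, hxA, -, rfl⟩ := hstep
    rw [Finset.coe_insert]
    exact insert_subset (.inr hxA.1) ih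

theorem qle_iff [NeZero n] {p q : QCond n} :
    QLE n p q ↔ ReflTransGen (StemStep n q.A) q.w p.w ∧
      ∀ i : Fin n, sliceMod n p.A i ⊆ sliceMod n q.A i := by
  constructor
  · rintro ⟨hsub, hend, hslice, hA⟩
    exact ⟨reflTransGen_stemStep_of_endExtension hsub hend hslice, fun i => hA i i.isLt⟩
  · rintro ⟨hstem, hA⟩
    obtain ⟨hsub, hend, hslice⟩ := endExtension_of_reflTransGen_stemStep hstem
    exact ⟨hsub, hend, hslice, fun i hi => hA ⟨i, hi⟩⟩

theorem QLE.trans [NeZero n] {p q r : QCond n} (hpq : QLE n p q) (hqr : QLE n q r) :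
    QLE n p r := by
  rw [qle_iff] at hpq hqr ⊢
  exact ⟨hqr.1.trans (reflTransGen_stemStep_mono hpq.1 fun i y hy _ => hqr.2 i hy),
    fun i => (hpq.2 i).trans (hqr.2 i)⟩

end Stems

section Diagonal

variable {n : ℕ} {D : Fin n → Ultrafilter ℕ}

/-- The diagonal intersection property of `Q(D 0, …, D (n-1))`: for every assignment of sets
`Z t i ∈ D i` to finite sets `t` and every stem `w` there is a condition with stem `w` whose points
of the `i`-th slice lie in `Z t i` for each `t` that can occur below them as part of a stem of an
extension. All that pure decision needs to know about the ultrafilters is this property. -/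
def HasDiagonalConditions (D : Fin n → Ultrafilter ℕ) : Prop :=
  ∀ (w : Finset ℕ) (Z : Finset ℕ → Fin n → Set ℕ), (∀ t i, Z t i ∈ D i) →
    ∃ q : QCond n, q.w = w ∧ InQD D q ∧ ∀ t : Finset ℕ, (t : Set ℕ) ⊆ ↑w ∪ q.A →
      ∀ i : Fin n, ∀ y ∈ sliceMod n q.A i, (∀ z ∈ t, z < y) → y ∈ Z t i

theorem exists_mem_forall_le_imp_mem (hD : ∀ i, IsRamseyUF (D i)) {X : ℕ → Fin n → Set ℕ}
    (hX : ∀ m i, X m i ∈ D i) :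
    ∃ (A : Fin n → Set ℕ) (g : ℕ → ℕ), (∀ i, A i ∈ D i) ∧ Monotone g ∧ (∀ m, m < g m) ∧
      ∀ m i, ∀ y ∈ A i, g m ≤ y → y ∈ X m i := by
  choose A hA hfin using fun i => (hD i).exists_forall_finite_diff fun m => hX m i
  have hbound (m : ℕ) : ∃ N, ∀ i, ∀ y ∈ A i, N ≤ y → y ∈ X m i := by
    obtain ⟨N, hN⟩ := (finite_iUnion fun i => hfin i m).bddAbove
    refine ⟨N + 1, fun i y hy hNy => ?_⟩
    by_contra hyX
    exact (hN (mem_iUnion.2 ⟨i, hy, hyX⟩)).not_gt hNy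
  choose N hN using hbound
  let g := partialSups fun m => max (m + 1) (N m)
  have hg (m : ℕ) : max (m + 1) (N m) ≤ g m :=
    le_partialSups (fun m => max (m + 1) (N m)) m
  exact ⟨A, g, hA, g.monotone, fun m => (le_max_left _ _).trans (hg m),
    fun m i y hy hgy => hN m i y hy ((le_max_right _ _).trans ((hg m).trans hgy))⟩

theorem PairwiseNotRKEquiv.hasDiagonalConditions [NeZero n] (hRK : PairwiseNotRKEquiv D)
    (hD : ∀ i, IsRamseyUF (D i)) : HasDiagonalConditions D := by
  intro w Z hZ
  let X (m : ℕ) (i : Fin n) : Set ℕ := ⋂ t ∈ (Finset.range (m + 1)).powerset, Z t i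
  have hX (m : ℕ) (i : Fin n) : X m i ∈ D i := (biInter_finset_mem _).2 fun t _ => hZ t i
  have mem_Z {m i y} {t : Finset ℕ} (hy : y ∈ X m i) (ht : ∀ z ∈ t, z ≤ m) : y ∈ Z t i :=
    mem_iInter₂.1 hy t (Finset.mem_powerset.2 fun z hz => Finset.mem_range_succ_iff.2 (ht z hz))
  obtain ⟨A, g, hA, hg, hlt, hAX⟩ := exists_mem_forall_le_imp_mem hD hX
  obtain ⟨c, hcA, hcg, hcD⟩ := hRK.exists_sparse_interleaving hD
    (fun i => inter_mem (hA i) ((hD i).le_atTop (Ici_mem_atTop (g (w.sup id))))) hg hlt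
  have hc : StrictMono c := strictMono_nat_of_lt_succ fun m => (hlt _).trans_le (hcg m)
  have hwc {z : ℕ} (hz : z ∈ w) (m : ℕ) : z ≤ c m :=
    (Finset.le_sup (f := id) hz).trans ((hlt _).le.trans (hcA m).2)
  refine ⟨⟨w, range c, infinite_range_of_injective hc.injective⟩, rfl,
    fun i => sliceMod_range hc i ▸ hcD i, fun t ht i y hy hty => ?_⟩
  rw [sliceMod_range hc] at hy
  obtain ⟨m, hm, rfl⟩ := hy
  obtain rfl : Fin.ofNat n m = i := Fin.ext hm
  obtain ⟨l, htl, hgl⟩ : ∃ l, (∀ z ∈ t, z ≤ l) ∧ g l ≤ c m := by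
    cases m with
    | zero =>
      refine ⟨w.sup id, fun z hz => ?_, (hcA 0).2⟩
      rcases ht hz with hzw | ⟨k, rfl⟩
      · exact Finset.le_sup (f := id) hzw
      · exact absurd (hc.lt_iff_lt.1 (hty _ hz)) k.not_lt_zero
    | succ m =>
      refine ⟨c m, fun z hz => ?_, hcg m⟩
      rcases ht hz with hzw | ⟨k, rfl⟩
      · exact hwc hzw m
      · exact hc.monotone (Nat.le_of_lt_succ (hc.lt_iff_lt.1 (hty _ hz)))
  exact mem_Z (hAX l _ _ (hcA m).1 hgl) htl

theorem HasDiagonalConditions.exists_common_extension [NeZero n] (hD : HasDiagonalConditions D)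
    {p q : QCond n} (hp : InQD D p) (hq : InQD D q) (h : ReflTransGen (StemStep n q.A) q.w p.w) :
    ∃ r, InQD D r ∧ r.w = p.w ∧ QLE n r p ∧ QLE n r q := by
  obtain ⟨r, hrw, hr, hrZ⟩ := hD p.w (fun _ i => sliceMod n p.A i ∩ sliceMod n q.A i)
    fun _ i => inter_mem (hp i) (hq i)
  have hslice (i : Fin n) : sliceMod n r.A i ⊆ sliceMod n p.A i ∩ sliceMod n q.A i :=
    fun y hy => hrZ ∅ (by simp) i y hy (by simp)
  exact ⟨r, hr, hrw, qle_iff.2 ⟨hrw ▸ .refl, fun i => (hslice i).trans inter_subset_left⟩,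
    qle_iff.2 ⟨hrw ▸ h, fun i => (hslice i).trans inter_subset_right⟩⟩

end Diagonal

section PureDecision

variable {n : ℕ} {D : Fin n → Ultrafilter ℕ} {I I₀ I₁ : Set (QCond n)} {s : Finset ℕ}

/-- `I` is an open subset of `Q(D 0, …, D (n-1))`, i.e. closed under extensions; its members outside
that suborder are ignored. -/
def IsOpenIn (D : Fin n → Ultrafilter ℕ) (I : Set (QCond n)) : Prop :=
  ∀ p q : QCond n, InQD D p → InQD D q → QLE n p q → q ∈ I → p ∈ I

/-- `I` is a dense subset of `Q(D 0, …, D (n-1))`. -/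
def IsDenseIn (D : Fin n → Ultrafilter ℕ) (I : Set (QCond n)) : Prop :=
  ∀ p : QCond n, InQD D p → ∃ q : QCond n, InQD D q ∧ QLE n q p ∧ q ∈ I

/-- No extension of `q` in `Q(D 0, …, D (n-1))` belongs to `I`, i.e. `q` decides against `I`. -/
def Avoids (D : Fin n → Ultrafilter ℕ) (I : Set (QCond n)) (q : QCond n) : Prop :=
  ∀ r : QCond n, InQD D r → QLE n r q → r ∉ I

/-- Some condition of `Q(D 0, …, D (n-1))` with stem `s` decides against `I`. -/
def StemAvoids (D : Fin n → Ultrafilter ℕ) (I : Set (QCond n)) (s : Finset ℕ) : Prop :=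
  ∃ q : QCond n, InQD D q ∧ q.w = s ∧ Avoids D I q

theorem StemAvoids.exists_pure_extension [NeZero n] {p : QCond n} (h : StemAvoids D I p.w)
    (hD : HasDiagonalConditions D) (hp : InQD D p) :
    ∃ q, InQD D q ∧ q.w = p.w ∧ QLE n q p ∧ Avoids D I q := by
  obtain ⟨q₀, hq₀, hw, hav⟩ := h
  obtain ⟨q, hq, hqw, hqp, hqq₀⟩ := hD.exists_common_extension hp hq₀ (hw ▸ .refl)
  exact ⟨q, hq, hqw, hqp, fun r hr hrq => hav r hr (hrq.trans hqq₀)⟩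

theorem IsOpenIn.exists_mem_stemStep [NeZero n] (hI : IsOpenIn D I) {r : QCond n}
    (hr : InQD D r) (hrI : r ∈ I) :
    ∃ r' ∈ I, InQD D r' ∧ StemStep n r.A r.w r'.w := by
  obtain ⟨t, ht⟩ := exists_stemStep (n := n) r.infinite r.w
  have hle : QLE n ⟨t, r.A, r.infinite⟩ r := qle_iff.2 ⟨.single ht, fun _ => subset_rfl⟩
  exact ⟨⟨t, r.A, r.infinite⟩, hI _ r hr hr hle hrI, hr, ht⟩

theorem IsOpenIn.stemAvoids_of_eventually_insert [NeZero n] (hI : IsOpenIn D I)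
    (hD : HasDiagonalConditions D)
    (hs : ∀ᶠ x in D (Fin.ofNat n s.card), StemAvoids D I (insert x s)) : StemAvoids D I s := by
  have hwit (t : Finset ℕ) : ∃ q, InQD D q ∧ (StemAvoids D I t → q.w = t ∧ Avoids D I q) := by
    by_cases ht : StemAvoids D I t
    · exact ht.imp fun q hq => ⟨hq.1, fun _ => hq.2⟩
    · obtain ⟨q, -, hq, -⟩ := hD ∅ (fun _ _ => univ) fun _ _ => univ_mem
      exact ⟨q, hq, fun h => absurd h ht⟩
  choose b hb hbav using hwit
  have hnext (i : Fin n) : {x | i = Fin.ofNat n s.card → StemAvoids D I (insert x s)} ∈ D i := by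
    by_cases hi : i = Fin.ofNat n s.card
    · subst hi
      filter_upwards [hs] with x hx _ using hx
    · exact univ_mem' fun x h => absurd h hi
  obtain ⟨q, rfl, hq, hqZ⟩ := hD s _ fun t i => inter_mem (hb t i) (hnext i)
  refine ⟨q, hq, rfl, fun r hr hrq hrI => ?_⟩
  obtain ⟨r', hr'I, hr', hstep⟩ := hI.exists_mem_stemStep hr hrI
  have hstem : TransGen (StemStep n q.A) q.w r'.w := by
    obtain ⟨x, hx, hmax, hins⟩ := hstep
    exact .tail' (qle_iff.1 hrq).1 ⟨x, (qle_iff.1 hrq).2 (Fin.ofNat n _) hx, hmax, hins⟩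
  obtain ⟨t, ⟨x, hxq, hx, rfl⟩, htr'⟩ := TransGen.head'_iff.1 hstem
  have hxav : StemAvoids D I (insert x q.w) :=
    (hqZ q.w subset_union_left (Fin.ofNat n _) x hxq hx).2 rfl
  obtain ⟨hbw, hav⟩ := hbav _ hxav
  have htq : ((insert x q.w : Finset ℕ) : Set ℕ) ⊆ ↑q.w ∪ q.A :=
    coe_subset_union_of_reflTransGen_stemStep (.single ⟨x, hxq, hx, rfl⟩)
  have hbr' : ReflTransGen (StemStep n (b (insert x q.w)).A) (b (insert x q.w)).w r'.w :=
    hbw.symm ▸ reflTransGen_stemStep_mono htr' fun i y hy hty => (hqZ _ htq i y hy hty).1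
  obtain ⟨e, he, -, her', heb⟩ := hD.exists_common_extension hr' (hb _) hbr'
  exact hav e he heb (hI e r' he hr' her' hr'I)

theorem stemAvoids_or_stemAvoids [NeZero n] (hD : HasDiagonalConditions D) (h₀ : IsOpenIn D I₀)
    (h₁ : IsOpenIn D I₁) (hdisj : Disjoint I₀ I₁) (hdense : IsDenseIn D (I₀ ∪ I₁))
    (w : Finset ℕ) : StemAvoids D I₀ w ∨ StemAvoids D I₁ w := by
  by_contra hw
  let Undecided (t : Finset ℕ) : Prop := ¬ (StemAvoids D I₀ t ∨ StemAvoids D I₁ t)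
  have hstep (t : Finset ℕ) (ht : Undecided t) :
      ∀ᶠ x in D (Fin.ofNat n t.card), Undecided (insert x t) := by
    by_contra hdec
    rcases Ultrafilter.eventually_or.1 (Ultrafilter.eventually_not.not_left.1 hdec) with hx | hx
    · exact ht (.inl (h₀.stemAvoids_of_eventually_insert hD hx))
    · exact ht (.inr (h₁.stemAvoids_of_eventually_insert hD hx))
  have hstep' (t : Finset ℕ) (i : Fin n) :
      {x | Undecided t → i = Fin.ofNat n t.card → Undecided (insert x t)} ∈ D i := by
    by_cases ht : Undecided t ∧ i = Fin.ofNat n t.card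
    · obtain ⟨ht, rfl⟩ := ht
      filter_upwards [hstep t ht] with x hx _ _ using hx
    · exact univ_mem' fun x h hi => absurd ⟨h, hi⟩ ht
  obtain ⟨q, rfl, hq, hqZ⟩ := hD w _ hstep'
  have hund {t : Finset ℕ} (ht : ReflTransGen (StemStep n q.A) q.w t) : Undecided t := by
    induction ht with
    | refl => exact hw
    | tail hst hst' ih =>
      obtain ⟨x, hxq, hx, rfl⟩ := hst'
      exact hqZ _ (coe_subset_union_of_reflTransGen_stemStep hst) (Fin.ofNat n _) x hxq hx ih rfl
  obtain ⟨r, hr, hrq, hrI⟩ := hdense q hq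
  apply hund (qle_iff.1 hrq).1
  rcases hrI with hrI | hrI
  · exact .inr ⟨r, hr, rfl, fun e he her => disjoint_left.1 hdisj (h₀ e r he hr her hrI)⟩
  · exact .inl ⟨r, hr, rfl, fun e he her => disjoint_right.1 hdisj (h₁ e r he hr her hrI)⟩

end PureDecision

/-- Lemma 1.14 (pure decision for `Q(D 0, …, D (n-1))`, combinatorial form): if
`I0, I1 ⊆ Q(D 0, …, D (n-1))` are open, disjoint, and their union is dense, then every
condition `p` has a pure extension `q ≤⁰ p` no extension of which lies in one of the
two sets. -/
theorem stmt5 (n : ℕ) (hn : 0 < n) (D : Fin n → Ultrafilter ℕ)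
    (hRam : ∀ i : Fin n, IsRamseyUF (D i)) (hRK : PairwiseNotRKEquiv D)
    (I0 I1 : Set (QCond n))
    (hsub0 : ∀ p ∈ I0, InQD D p) (hsub1 : ∀ p ∈ I1, InQD D p)
    (hopen0 : ∀ p q : QCond n, InQD D p → InQD D q → QLE n p q → q ∈ I0 → p ∈ I0)
    (hopen1 : ∀ p q : QCond n, InQD D p → InQD D q → QLE n p q → q ∈ I1 → p ∈ I1)
    (hdisj : I0 ∩ I1 = ∅)
    (hdense : ∀ p : QCond n, InQD D p →
      ∃ q : QCond n, InQD D q ∧ QLE n q p ∧ q ∈ I0 ∪ I1)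
    (p : QCond n) (hp : InQD D p) :
    ∃ q : QCond n, InQD D q ∧ q.w = p.w ∧ QLE n q p ∧
      ((∀ r : QCond n, InQD D r → QLE n r q → r ∉ I1) ∨
       (∀ r : QCond n, InQD D r → QLE n r q → r ∉ I0)) := by
  have : NeZero n := ⟨hn.ne'⟩
  have hD : HasDiagonalConditions D := hRK.hasDiagonalConditions hRam
  have hdec : StemAvoids D I0 p.w ∨ StemAvoids D I1 p.w :=
    stemAvoids_or_stemAvoids hD hopen0 hopen1 (disjoint_iff_inter_eq_empty.2 hdisj) hdense p.w
  rcases hdec with h | h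
  · obtain ⟨q, hq, hqw, hqp, hav⟩ := h.exists_pure_extension hD hp
    exact ⟨q, hq, hqw, hqp, .inr hav⟩
  · obtain ⟨q, hq, hqw, hqp, hav⟩ := h.exists_pure_extension hD hp
    exact ⟨q, hq, hqw, hqp, .inl hav⟩
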